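/- (Theorem 4, relation for OUc) Let n ≥ 1 and g ≥ 0, and let U_g be the set of genus-g elements of the coset U = β·C_ρ in S_{2n}. Write N(T) for the number of equivalence classes of U_g under the equivalence relation generated by σ ≈ β²·σ·β⁻² together with σ ≈ t(σ) for each map t in the set T, where the possible maps are the mirror σ ↦ σ·ρ and the swap σ ↦ β⁻¹·ρ·σ⁻¹·β. Then: if n is even, N({mirror}) = 2·N({mirror, swap}); and if n is odd, N({mirror}) = N({swap}). -/

import Mathlib

/-- The fixed-point-free involution of `Fin (2n)` pairing `2k` with `2k+1`. -/
def rho (n : ℕ) : Equiv.Perm (Fin (2 * n)) :=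
  Function.Involutive.toPerm
    (fun x => ⟨if x.val % 2 = 0 then x.val + 1 else x.val - 1, by
      have := x.isLt; split_ifs with h <;> omega⟩)
    (by
      intro x
      have hx := x.isLt
      apply Fin.ext
      dsimp only
      split_ifs <;> omega)

/-- The number of cycles of a permutation of `Fin (2n)`, counting fixed points. -/
def numCycles (n : ℕ) (x : Equiv.Perm (Fin (2 * n))) : ℕ :=
  Multiset.card x.cycleType + (2 * n - x.support.card)

/-- The genus-`g` part of the coset `U = β·C_ρ`. -/
def Ugen (n g : ℕ) : Set (Equiv.Perm (Fin (2 * n))) :=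
  {σ | (∃ ξ ∈ Subgroup.centralizer {rho n}, σ = finRotate (2 * n) * ξ) ∧
       numCycles n σ + numCycles n (σ * rho n) + 2 * g = n + 2}

/-- The number of equivalence classes of a set `s` of permutations under the smallest
equivalence relation identifying `σ` with `f σ` for every `f` in `F`. -/
noncomputable def numClasses (n : ℕ) (s : Set (Equiv.Perm (Fin (2 * n))))
    (F : Set (Equiv.Perm (Fin (2 * n)) → Equiv.Perm (Fin (2 * n)))) : ℕ :=
  Nat.card (Quot (fun a b : s => ∃ f ∈ F, (b : Equiv.Perm (Fin (2 * n))) = f a))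

/-- Conjugation by `β²`. -/
def conjB2 (n : ℕ) : Equiv.Perm (Fin (2 * n)) → Equiv.Perm (Fin (2 * n)) :=
  fun σ => finRotate (2 * n) ^ 2 * σ * (finRotate (2 * n) ^ 2)⁻¹

/-- The swap map `σ ↦ β⁻¹·ρ·σ⁻¹·β`. -/
def swapMap (n : ℕ) : Equiv.Perm (Fin (2 * n)) → Equiv.Perm (Fin (2 * n)) :=
  fun σ => (finRotate (2 * n))⁻¹ * rho n * σ⁻¹ * finRotate (2 * n)

/-- The mirror map `σ ↦ σ·ρ`. -/
def mirrorMap (n : ℕ) : Equiv.Perm (Fin (2 * n)) → Equiv.Perm (Fin (2 * n)) :=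
  fun σ => σ * rho n

/-!
Adjoining to a family of identifications a further map that commutes with them, is an involution
on their classes and reverses a `±1`-valued invariant halves the number of classes: the old classes
correspond to pairs (new class, value of the invariant).

Write an element of `β·C_ρ` as `β·ξ`. The three maps become `ξ ↦ β²ξβ⁻²`, `ξ ↦ ξρ` and
`ξ ↦ β⁻²ρξ⁻¹`, where `ρ` is central of order two in `C_ρ`. If `n` is even, the invariant is the
sign of the permutation that `ξ` induces on the `n` pairs `{2k, 2k+1}`: there `ρ` acts trivially
and `β²` as an `n`-cycle, which is odd, so the swap reverses it. If `n` is odd, `ρ` is odd, so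
both the mirror and the swap reverse the sign of `σ` itself, and either one halves the number of
classes under conjugation by `β²`.
-/

open Equiv Function

section ClassesAndSigns

variable {X : Type*} {R : X → X → Prop} {t : X → X} {I : X → ℤˣ}

/-- The bijection between the classes of a relation `R` and the pairs of a class of `R` enlarged by
`a ~ t a` and a sign, for a map `t` that is an involution on the classes of `R` and reverses an
invariant `I` of `R`. The sign attached to the class of `a` is `I a`. -/
def quotEquivQuotProdSign (ht : ∀ a b, R a b → R (t a) (t b))
    (htt : ∀ a, Quot.mk R (t (t a)) = Quot.mk R a)
    (hI : ∀ a b, R a b → I a = I b) (hIt : ∀ a, I (t a) = -I a) :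
    Quot R ≃ Quot (fun a b => R a b ∨ b = t a) × ℤˣ where
  toFun := Quot.lift (fun a => (Quot.mk _ a, I a))
    fun a b hab => Prod.ext (Quot.sound (Or.inl hab)) (hI a b hab)
  invFun p := Quot.lift (fun a => if I a = p.2 then Quot.mk R a else Quot.mk R (t a))
    (by
      rintro a b (hab | rfl)
      · simp only [hI a b hab, Quot.sound hab, Quot.sound (ht a b hab)]
      · have hneg : -I a = p.2 ↔ ¬I a = p.2 := by
          rw [neg_eq_iff_eq_neg, ← Int.units_ne_iff_eq_neg]
        simp only [hIt, hneg, htt, ite_not]) p.1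
  left_inv := by
    rintro ⟨a⟩
    exact if_pos rfl
  right_inv := by
    rintro ⟨⟨a⟩, ε⟩
    by_cases ha : I a = ε
    · simp [ha]
    · have hε : I (t a) = ε := by rw [hIt, ← Int.units_ne_iff_eq_neg.mp (Ne.symm ha)]
      have hta : Quot.mk (fun a b => R a b ∨ b = t a) (t a) = Quot.mk _ a :=
        (Quot.sound (r := fun a b => R a b ∨ b = t a) (Or.inr rfl)).symm
      simp [ha, hε, hta]

end ClassesAndSigns

theorem numClasses_eq_two_mul_numClasses_insert {n : ℕ} {s : Set (Perm (Fin (2 * n)))}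
    {F : Set (Perm (Fin (2 * n)) → Perm (Fin (2 * n)))}
    {t : Perm (Fin (2 * n)) → Perm (Fin (2 * n))} {I : Perm (Fin (2 * n)) → ℤˣ}
    (hts : Set.MapsTo t s s) (hcomm : ∀ f ∈ F, ∀ σ ∈ s, t (f σ) = f (t σ))
    (hsq : ∀ σ ∈ s, t (t σ) = σ ∨ ∃ f ∈ F, f (t (t σ)) = σ)
    (hI : ∀ f ∈ F, ∀ σ ∈ s, I (f σ) = I σ) (hIt : ∀ σ ∈ s, I (t σ) = -I σ) :
    numClasses n s F = 2 * numClasses n s (insert t F) := by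
  let R : s → s → Prop := fun a b => ∃ f ∈ F, (b : Perm (Fin (2 * n))) = f a
  let t' : s → s := hts.restrict t s s
  have ht : ∀ a b, R a b → R (t' a) (t' b) := by
    rintro a b ⟨f, hf, hb⟩
    exact ⟨f, hf, (congrArg t hb).trans (hcomm f hf a a.2)⟩
  have htt : ∀ a, Quot.mk R (t' (t' a)) = Quot.mk R a := by
    intro a
    rcases hsq a a.2 with h | ⟨f, hf, h⟩
    · exact congrArg _ (Subtype.ext h)
    · exact Quot.sound ⟨f, hf, h.symm⟩
  have hI' : ∀ a b, R a b → I a = I b := by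
    rintro a b ⟨f, hf, hb⟩
    rw [hb, hI f hf a a.2]
  have hR' : ∀ a b : s, (R a b ∨ b = t' a) ↔
      ∃ f ∈ insert t F, (b : Perm (Fin (2 * n))) = f a := by
    intro a b
    rw [Set.exists_mem_insert, or_comm, Subtype.ext_iff]
    rfl
  calc numClasses n s F
      = Nat.card (Quot (fun a b => R a b ∨ b = t' a) × ℤˣ) :=
        Nat.card_congr (quotEquivQuotProdSign ht htt hI' fun a => hIt a a.2)
    _ = Nat.card (Quot (fun a b => R a b ∨ b = t' a)) * 2 := by
        rw [Nat.card_prod, Nat.card_eq_fintype_card (α := ℤˣ), Fintype.card_units_int]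
    _ = 2 * numClasses n s (insert t F) := by
        rw [mul_comm, Nat.card_congr (Quot.congrRight hR')]
        rfl

theorem val_rho (n : ℕ) (x : Fin (2 * n)) :
    (rho n x).val = if x.val % 2 = 0 then x.val + 1 else x.val - 1 := rfl

theorem val_finRotate (n : ℕ) (x : Fin n) :
    (finRotate n x).val = if x.val + 1 = n then 0 else x.val + 1 := by
  cases n with
  | zero => exact x.elim0
  | succ m => simp only [coe_finRotate, Fin.ext_iff, Fin.val_last, Nat.add_right_cancel_iff]

theorem rho_mul_rho (n : ℕ) : rho n * rho n = 1 := by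
  ext x
  simp only [Perm.mul_apply, val_rho, Perm.one_apply]
  split_ifs <;> omega

theorem rho_inv (n : ℕ) : (rho n)⁻¹ = rho n := inv_eq_of_mul_eq_one_left (rho_mul_rho n)

theorem finRotate_sq_mul_rho (n : ℕ) :
    finRotate (2 * n) ^ 2 * rho n = rho n * finRotate (2 * n) ^ 2 := by
  ext x
  simp only [pow_two, Perm.mul_apply, val_rho, val_finRotate]
  split_ifs <;> omega

theorem rho_apply_ne (n : ℕ) (x : Fin (2 * n)) : rho n x ≠ x := by
  rw [ne_eq, Fin.ext_iff, val_rho]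
  split_ifs <;> omega

theorem sign_rho (n : ℕ) : Perm.sign (rho n) = (-1) ^ n := by
  have : IsEmpty (fixedPoints (rho n)) := ⟨fun x => rho_apply_ne n x x.2⟩
  rw [Perm.sign_of_pow_two_eq_one (by rw [pow_two, rho_mul_rho]), Fintype.card_fin,
    Fintype.card_eq_zero, Nat.sub_zero, Nat.mul_div_cancel_left n two_pos]

/-- The centralizer `C_ρ`. -/
abbrev rhoCentralizer (n : ℕ) : Subgroup (Perm (Fin (2 * n))) :=
  Subgroup.centralizer {rho n}

/-- `ρ` as an element of `C_ρ`. -/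
def centralRho (n : ℕ) : rhoCentralizer n :=
  ⟨rho n, Subgroup.mem_centralizer_singleton_iff.mpr rfl⟩

/-- `β²` as an element of `C_ρ`. -/
def centralBetaSq (n : ℕ) : rhoCentralizer n :=
  ⟨finRotate (2 * n) ^ 2, Subgroup.mem_centralizer_singleton_iff.mpr (finRotate_sq_mul_rho n)⟩

/-- The parametrization `ξ ↦ β·ξ` of the coset `U = β·C_ρ` by `C_ρ`. -/
def toCoset (n : ℕ) (ξ : rhoCentralizer n) : Perm (Fin (2 * n)) :=
  finRotate (2 * n) * ξ

section Coset

variable {n : ℕ}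

theorem toCoset_injective : Injective (toCoset n) :=
  (mul_right_injective _).comp Subtype.val_injective

theorem centralRho_commute (ξ : rhoCentralizer n) : Commute (centralRho n) ξ :=
  Subtype.ext (Subgroup.mem_centralizer_singleton_iff.mp ξ.2).symm

theorem centralRho_mul_centralRho : centralRho n * centralRho n = 1 :=
  Subtype.ext (rho_mul_rho n)

theorem conjB2_toCoset (ξ : rhoCentralizer n) :
    conjB2 n (toCoset n ξ) = toCoset n (centralBetaSq n * ξ * (centralBetaSq n)⁻¹) := by
  simp only [conjB2, toCoset, centralBetaSq, Subgroup.coe_mul, Subgroup.coe_inv]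
  group

theorem mirrorMap_toCoset (ξ : rhoCentralizer n) :
    mirrorMap n (toCoset n ξ) = toCoset n (ξ * centralRho n) :=
  mul_assoc _ _ _

theorem swapMap_toCoset (ξ : rhoCentralizer n) :
    swapMap n (toCoset n ξ) = toCoset n ((centralBetaSq n)⁻¹ * centralRho n * ξ⁻¹) := by
  simp only [swapMap, toCoset, centralBetaSq, centralRho, Subgroup.coe_mul, Subgroup.coe_inv]
  group

end Coset

section Commutation

variable {n : ℕ} {σ : Perm (Fin (2 * n))}

theorem mirrorMap_mirrorMap (σ : Perm (Fin (2 * n))) : mirrorMap n (mirrorMap n σ) = σ := by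
  simp only [mirrorMap, mul_assoc, rho_mul_rho, mul_one]

theorem mirrorMap_conjB2 (σ : Perm (Fin (2 * n))) :
    mirrorMap n (conjB2 n σ) = conjB2 n (mirrorMap n σ) := by
  have hcomm : Commute (finRotate (2 * n) ^ 2) (rho n) := finRotate_sq_mul_rho n
  simp only [mirrorMap, conjB2, mul_assoc, hcomm.inv_left.eq]

theorem swapMap_conjB2 (σ : Perm (Fin (2 * n))) :
    swapMap n (conjB2 n σ) = conjB2 n (swapMap n σ) := by
  set β := finRotate (2 * n) with hβ
  calc swapMap n (conjB2 n σ)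
      = β⁻¹ * (rho n * β ^ 2) * σ⁻¹ * (β ^ 2)⁻¹ * β := by
        simp only [swapMap, conjB2, ← hβ]
        group
    _ = conjB2 n (swapMap n σ) := by
        rw [← finRotate_sq_mul_rho]
        simp only [swapMap, conjB2, ← hβ]
        group

theorem swapMap_mirrorMap (hσ : σ ∈ Set.range (toCoset n)) :
    swapMap n (mirrorMap n σ) = mirrorMap n (swapMap n σ) := by
  obtain ⟨ξ, rfl⟩ := hσ
  have hinv : (centralRho n)⁻¹ = centralRho n := inv_eq_of_mul_eq_one_left centralRho_mul_centralRho
  rw [mirrorMap_toCoset, swapMap_toCoset, swapMap_toCoset, mirrorMap_toCoset, mul_inv_rev, hinv,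
    (centralRho_commute ξ⁻¹).eq, mul_assoc _ ξ⁻¹]

theorem conjB2_swapMap_swapMap (hσ : σ ∈ Set.range (toCoset n)) :
    conjB2 n (swapMap n (swapMap n σ)) = σ := by
  obtain ⟨ξ, rfl⟩ := hσ
  simp only [conjB2_toCoset, swapMap_toCoset]
  congr 1
  calc centralBetaSq n * ((centralBetaSq n)⁻¹ * centralRho n *
        ((centralBetaSq n)⁻¹ * centralRho n * ξ⁻¹)⁻¹) * (centralBetaSq n)⁻¹
      = centralRho n * ξ * (centralRho n)⁻¹ := by group
    _ = ξ := by rw [(centralRho_commute ξ).eq, mul_inv_cancel_right]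

end Commutation

section Genus

variable {n g : ℕ} {σ : Perm (Fin (2 * n))}

theorem numCycles_inv (σ : Perm (Fin (2 * n))) : numCycles n σ⁻¹ = numCycles n σ := by
  rw [numCycles, numCycles, Perm.cycleType_inv, Perm.support_inv]

theorem numCycles_conj (τ σ : Perm (Fin (2 * n))) :
    numCycles n (τ * σ * τ⁻¹) = numCycles n σ := by
  rw [numCycles, numCycles, Perm.cycleType_conj, Perm.card_support_conj]

theorem numCycles_swapMap (σ : Perm (Fin (2 * n))) :
    numCycles n (swapMap n σ) = numCycles n (mirrorMap n σ) := by
  have hconj : swapMap n σ =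
      (finRotate (2 * n))⁻¹ * (mirrorMap n σ)⁻¹ * ((finRotate (2 * n))⁻¹)⁻¹ := by
    simp only [swapMap, mirrorMap, mul_inv_rev, rho_inv, inv_inv, mul_assoc]
  rw [hconj, numCycles_conj, numCycles_inv]

theorem mem_Ugen_iff : σ ∈ Ugen n g ↔ σ ∈ Set.range (toCoset n) ∧
    numCycles n σ + numCycles n (mirrorMap n σ) + 2 * g = n + 2 := by
  simp only [Ugen, Set.mem_ofPred_eq, Set.mem_range, Subtype.exists, toCoset, mirrorMap,
    exists_prop, eq_comm]

theorem mem_range_toCoset_of_mem_Ugen (hσ : σ ∈ Ugen n g) : σ ∈ Set.range (toCoset n) :=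
  (mem_Ugen_iff.mp hσ).1

theorem mapsTo_mirrorMap_Ugen : Set.MapsTo (mirrorMap n) (Ugen n g) (Ugen n g) := by
  intro σ hσ
  obtain ⟨⟨ξ, rfl⟩, hgenus⟩ := mem_Ugen_iff.mp hσ
  refine mem_Ugen_iff.mpr ⟨⟨_, (mirrorMap_toCoset ξ).symm⟩, ?_⟩
  rwa [mirrorMap_mirrorMap, add_comm (numCycles _ _)]

theorem mapsTo_swapMap_Ugen : Set.MapsTo (swapMap n) (Ugen n g) (Ugen n g) := by
  intro σ hσ
  obtain ⟨⟨ξ, rfl⟩, hgenus⟩ := mem_Ugen_iff.mp hσ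
  refine mem_Ugen_iff.mpr ⟨⟨_, (swapMap_toCoset ξ).symm⟩, ?_⟩
  rwa [← swapMap_mirrorMap ⟨ξ, rfl⟩, numCycles_swapMap, numCycles_swapMap, mirrorMap_mirrorMap,
    add_comm (numCycles _ _)]

end Genus

section Pairs

variable {n : ℕ}

/-- The index `k` of the pair `{2k, 2k+1}` containing a point. -/
def pairIndex (x : Fin (2 * n)) : Fin n :=
  ⟨x.val / 2, by omega⟩

/-- The even point `2k` of the `k`-th pair. -/
def pairBase (k : Fin n) : Fin (2 * n) :=
  ⟨2 * k.val, by omega⟩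

theorem pairIndex_pairBase (k : Fin n) : pairIndex (pairBase k) = k :=
  Fin.ext (Nat.mul_div_cancel_left k.val two_pos)

theorem pairIndex_surjective : Surjective (pairIndex (n := n)) :=
  fun k => ⟨pairBase k, pairIndex_pairBase k⟩

theorem pairIndex_eq_iff {x y : Fin (2 * n)} :
    pairIndex x = pairIndex y ↔ x = y ∨ x = rho n y := by
  simp only [pairIndex, Fin.ext_iff, val_rho]
  split_ifs <;> omega

theorem pairIndex_rho (x : Fin (2 * n)) : pairIndex (rho n x) = pairIndex x :=
  pairIndex_eq_iff.mpr (Or.inr rfl)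

theorem pairIndex_apply_congr (ξ : rhoCentralizer n) {x y : Fin (2 * n)}
    (hxy : pairIndex x = pairIndex y) : pairIndex (ξ.1 x) = pairIndex (ξ.1 y) := by
  rcases pairIndex_eq_iff.mp hxy with rfl | rfl
  · rfl
  · have hcomm : ξ.1 (rho n y) = rho n (ξ.1 y) :=
      DFunLike.congr_fun (Subgroup.mem_centralizer_singleton_iff.mp ξ.2) y
    rw [hcomm, pairIndex_rho]

/-- The action of `C_ρ` on the `n` pairs `{2k, 2k+1}`. -/
def pairHom (n : ℕ) : rhoCentralizer n →* Perm (Fin n) :=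
  MonoidHom.toHomPerm
    { toFun := fun ξ k => pairIndex (ξ.1 (pairBase k))
      map_one' := funext pairIndex_pairBase
      map_mul' := fun ξ _ => funext fun _ =>
        pairIndex_apply_congr ξ (pairIndex_pairBase _).symm }

theorem pairHom_pairIndex (ξ : rhoCentralizer n) (x : Fin (2 * n)) :
    pairHom n ξ (pairIndex x) = pairIndex (ξ.1 x) :=
  pairIndex_apply_congr ξ (pairIndex_pairBase _)

theorem pairHom_centralRho : pairHom n (centralRho n) = 1 :=
  Equiv.ext <| pairIndex_surjective.forall.mpr fun x =>
    (pairHom_pairIndex _ x).trans (pairIndex_rho x)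

theorem pairIndex_finRotate_sq (x : Fin (2 * n)) :
    pairIndex ((finRotate (2 * n) ^ 2) x) = finRotate n (pairIndex x) := by
  simp only [Fin.ext_iff, pairIndex, pow_two, Perm.mul_apply, val_finRotate]
  split_ifs <;> omega

theorem pairHom_centralBetaSq : pairHom n (centralBetaSq n) = finRotate n :=
  Equiv.ext <| pairIndex_surjective.forall.mpr fun x =>
    (pairHom_pairIndex _ x).trans (pairIndex_finRotate_sq x)

end Pairs

section Signs

variable {n : ℕ} {σ : Perm (Fin (2 * n))}

/-- The sign of the permutation of the `n` pairs induced by `ξ`, as a function of `σ = β·ξ`;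
it takes the junk value `1` outside the coset `β·C_ρ`. -/
noncomputable def pairSign (n : ℕ) : Perm (Fin (2 * n)) → ℤˣ :=
  extend (toCoset n) (fun ξ => Perm.sign (pairHom n ξ)) 1

theorem pairSign_toCoset (ξ : rhoCentralizer n) :
    pairSign n (toCoset n ξ) = Perm.sign (pairHom n ξ) :=
  toCoset_injective.extend_apply _ _ ξ

theorem pairSign_conjB2 (hσ : σ ∈ Set.range (toCoset n)) :
    pairSign n (conjB2 n σ) = pairSign n σ := by
  obtain ⟨ξ, rfl⟩ := hσ
  simp only [conjB2_toCoset, pairSign_toCoset, map_mul, map_inv, mul_inv_cancel_comm]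

theorem pairSign_mirrorMap (hσ : σ ∈ Set.range (toCoset n)) :
    pairSign n (mirrorMap n σ) = pairSign n σ := by
  obtain ⟨ξ, rfl⟩ := hσ
  rw [mirrorMap_toCoset, pairSign_toCoset, pairSign_toCoset, map_mul, pairHom_centralRho, mul_one]

theorem pairSign_swapMap (hσ : σ ∈ Set.range (toCoset n)) :
    pairSign n (swapMap n σ) = (-1) ^ (n - 1) * pairSign n σ := by
  obtain ⟨ξ, rfl⟩ := hσ
  simp only [swapMap_toCoset, pairSign_toCoset, map_mul, map_inv, pairHom_centralRho,
    pairHom_centralBetaSq, mul_one, Int.units_inv_eq_self, sign_finRotate]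

theorem sign_conjB2 (σ : Perm (Fin (2 * n))) : Perm.sign (conjB2 n σ) = Perm.sign σ := by
  simp only [conjB2, map_mul, map_inv, mul_inv_cancel_comm]

theorem sign_mirrorMap (σ : Perm (Fin (2 * n))) :
    Perm.sign (mirrorMap n σ) = (-1) ^ n * Perm.sign σ := by
  rw [mirrorMap, Perm.sign_mul, sign_rho, mul_comm]

theorem sign_swapMap (σ : Perm (Fin (2 * n))) :
    Perm.sign (swapMap n σ) = (-1) ^ n * Perm.sign σ := by
  rw [swapMap, mul_assoc _ (rho n), Perm.sign_mul, Perm.sign_mul, Perm.sign_inv, mul_right_comm,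
    Int.units_mul_self, one_mul, Perm.sign_mul, sign_rho, Perm.sign_inv]

end Signs

section Counting

variable {n : ℕ}

theorem numClasses_conjB2_mirrorMap_eq_two_mul_of_even (hn : 1 ≤ n) (heven : Even n) (g : ℕ) :
    numClasses n (Ugen n g) {conjB2 n, mirrorMap n} =
      2 * numClasses n (Ugen n g) {swapMap n, conjB2 n, mirrorMap n} := by
  apply numClasses_eq_two_mul_numClasses_insert (I := pairSign n) mapsTo_swapMap_Ugen
  · rintro f (rfl | rfl) σ hσ
    · exact swapMap_conjB2 σ
    · exact swapMap_mirrorMap (mem_range_toCoset_of_mem_Ugen hσ)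
  · exact fun σ hσ => Or.inr ⟨_, Set.mem_insert _ _,
      conjB2_swapMap_swapMap (mem_range_toCoset_of_mem_Ugen hσ)⟩
  · rintro f (rfl | rfl) σ hσ
    · exact pairSign_conjB2 (mem_range_toCoset_of_mem_Ugen hσ)
    · exact pairSign_mirrorMap (mem_range_toCoset_of_mem_Ugen hσ)
  · intro σ hσ
    have hpred : Odd (n - 1) := Nat.Even.sub_odd hn heven odd_one
    rw [pairSign_swapMap (mem_range_toCoset_of_mem_Ugen hσ), hpred.neg_one_pow, neg_one_mul]

theorem numClasses_conjB2_eq_two_mul_mirrorMap_of_odd (hodd : Odd n) (g : ℕ) :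
    numClasses n (Ugen n g) {conjB2 n} =
      2 * numClasses n (Ugen n g) {mirrorMap n, conjB2 n} := by
  apply numClasses_eq_two_mul_numClasses_insert (I := Perm.sign) mapsTo_mirrorMap_Ugen
  · rintro f rfl σ -
    exact mirrorMap_conjB2 σ
  · exact fun σ _ => Or.inl (mirrorMap_mirrorMap σ)
  · rintro f rfl σ -
    exact sign_conjB2 σ
  · intro σ _
    rw [sign_mirrorMap, hodd.neg_one_pow, neg_one_mul]

theorem numClasses_conjB2_eq_two_mul_swapMap_of_odd (hodd : Odd n) (g : ℕ) :
    numClasses n (Ugen n g) {conjB2 n} =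
      2 * numClasses n (Ugen n g) {swapMap n, conjB2 n} := by
  apply numClasses_eq_two_mul_numClasses_insert (I := Perm.sign) mapsTo_swapMap_Ugen
  · rintro f rfl σ -
    exact swapMap_conjB2 σ
  · exact fun σ hσ => Or.inr ⟨_, rfl,
      conjB2_swapMap_swapMap (mem_range_toCoset_of_mem_Ugen hσ)⟩
  · rintro f rfl σ -
    exact sign_conjB2 σ
  · intro σ _
    rw [sign_swapMap, hodd.neg_one_pow, neg_one_mul]

end Counting

/-- Theorem 4, relation for OUc: `|OUc| = 2·|OUb|` for n even and `|OUc| = |OOb|`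
for n odd. -/
theorem OUc_relations (n : ℕ) (hn : 1 ≤ n) (g : ℕ) :
    (Even n →
      numClasses n (Ugen n g) {conjB2 n, mirrorMap n}
        = 2 * numClasses n (Ugen n g) {conjB2 n, mirrorMap n, swapMap n}) ∧
    (Odd n →
      numClasses n (Ugen n g) {conjB2 n, mirrorMap n}
        = numClasses n (Ugen n g) {conjB2 n, swapMap n}) := by
  constructor
  · intro heven
    rw [numClasses_conjB2_mirrorMap_eq_two_mul_of_even hn heven g, Set.insert_comm (swapMap n),
      Set.pair_comm (swapMap n)]
  · intro hodd
    have hmirror := numClasses_conjB2_eq_two_mul_mirrorMap_of_odd hodd g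
    have hswap := numClasses_conjB2_eq_two_mul_swapMap_of_odd hodd g
    rw [Set.pair_comm (conjB2 n), Set.pair_comm (conjB2 n)]
    exact Nat.eq_of_mul_eq_mul_left two_pos (hmirror.symm.trans hswap)
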